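/- There exist absolute constants C1, C2 > 0 such that for every finite irreducible reversible Markov chain (Ω,P,π), every probability measure μ on Ω, every 0 < α ≤ 1/2 and every real t ≥ 1: d_L(φ_{α,C1}(t), μ) ≤ d_c(t/2, μ) + C2 · t^{−α}. Moreover the same inequality holds with the worst-case distances d_L(φ_{α,C1}(t)) and d_c(t/2) in place of the μ-versions. -/

import Mathlib

open Matrix Filter Asymptotics

/-- `P` is a stochastic matrix. -/
def IsStochastic {Ω : Type*} [Fintype Ω] (P : Matrix Ω Ω ℝ) : Prop :=
  (∀ x y, 0 ≤ P x y) ∧ ∀ x, ∑ y, P x y = 1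

/-- `P` is irreducible. -/
def IsIrreducibleMatrix {Ω : Type*} [Fintype Ω] [DecidableEq Ω] (P : Matrix Ω Ω ℝ) : Prop :=
  ∀ x y, ∃ n : ℕ, 0 < (P ^ n) x y

/-- `μ` is a probability vector. -/
def IsProbVec {Ω : Type*} [Fintype Ω] (μ : Ω → ℝ) : Prop :=
  (∀ x, 0 ≤ μ x) ∧ ∑ x, μ x = 1

/-- The chain `(P, pi)` is reversible. -/
def IsReversible {Ω : Type*} [Fintype Ω] (P : Matrix Ω Ω ℝ) (pi : Ω → ℝ) : Prop :=
  ∀ x y, pi x * P x y = pi y * P y x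

/-- A finite irreducible Markov chain `P` with stationary distribution `pi`. -/
def IsMC {Ω : Type*} [Fintype Ω] [DecidableEq Ω] (P : Matrix Ω Ω ℝ) (pi : Ω → ℝ) : Prop :=
  IsStochastic P ∧ IsIrreducibleMatrix P ∧ IsProbVec pi ∧ pi ᵥ* P = pi

/-- A finite irreducible reversible Markov chain `P` with stationary distribution `pi`. -/
def IsRevMC {Ω : Type*} [Fintype Ω] [DecidableEq Ω] (P : Matrix Ω Ω ℝ) (pi : Ω → ℝ) : Prop :=
  IsMC P pi ∧ IsReversible P pi

/-- Total-variation distance between two measures on a finite set. -/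
noncomputable def tvDist {Ω : Type*} [Fintype Ω] (μ ν : Ω → ℝ) : ℝ :=
  (∑ x, |μ x - ν x|) / 2

/-- The lazy version `(I + P)/2` of `P`. -/
noncomputable def lazyM {Ω : Type*} [Fintype Ω] [DecidableEq Ω] (P : Matrix Ω Ω ℝ) :
    Matrix Ω Ω ℝ :=
  (2 : ℝ)⁻¹ • (1 + P)

/-- `d_c(t, μ)`: TV distance from stationarity of the continuous-time chain at time `t`,
started from `μ`. -/
noncomputable def contDist {Ω : Type*} [Fintype Ω] [DecidableEq Ω] (P : Matrix Ω Ω ℝ) (pi : Ω → ℝ)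
    (t : ℝ) (μ : Ω → ℝ) : ℝ :=
  tvDist (fun y => ∑' k : ℕ, Real.exp (-t) * t ^ k / (Nat.factorial k) * (μ ᵥ* (P ^ k)) y) pi

/-- `d_L(t, μ)`: TV distance from stationarity of the lazy chain at (discrete) time `t`,
started from `μ`. -/
noncomputable def lazyDist {Ω : Type*} [Fintype Ω] [DecidableEq Ω] (P : Matrix Ω Ω ℝ)
    (pi : Ω → ℝ) (t : ℝ) (μ : Ω → ℝ) : ℝ :=
  tvDist (μ ᵥ* (lazyM P ^ ⌊t⌋₊)) pi

/-- `d_ave(t, μ)`: TV distance from stationarity of the averaged chain at (discrete) time `t`,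
started from `μ`. -/
noncomputable def aveDist {Ω : Type*} [Fintype Ω] [DecidableEq Ω] (P : Matrix Ω Ω ℝ) (pi : Ω → ℝ)
    (t : ℝ) (μ : Ω → ℝ) : ℝ :=
  tvDist (fun y => ((μ ᵥ* (P ^ ⌊t⌋₊)) y + (μ ᵥ* (P ^ (⌊t⌋₊ + 1))) y) / 2) pi

/-- The point mass at `x`. -/
noncomputable def deltaMass {Ω : Type*} [DecidableEq Ω] (x : Ω) : Ω → ℝ :=
  fun y => if y = x then 1 else 0

/-- Worst-case continuous-time distance `d_c(t)`. -/
noncomputable def contDistMax {Ω : Type*} [Fintype Ω] [DecidableEq Ω] (P : Matrix Ω Ω ℝ)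
    (pi : Ω → ℝ) (t : ℝ) : ℝ :=
  ⨆ x : Ω, contDist P pi t (deltaMass x)

/-- Worst-case lazy distance `d_L(t)`. -/
noncomputable def lazyDistMax {Ω : Type*} [Fintype Ω] [DecidableEq Ω] (P : Matrix Ω Ω ℝ)
    (pi : Ω → ℝ) (t : ℝ) : ℝ :=
  ⨆ x : Ω, lazyDist P pi t (deltaMass x)

/-- Worst-case averaged distance `d_ave(t)`. -/
noncomputable def aveDistMax {Ω : Type*} [Fintype Ω] [DecidableEq Ω] (P : Matrix Ω Ω ℝ)
    (pi : Ω → ℝ) (t : ℝ) : ℝ :=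
  ⨆ x : Ω, aveDist P pi t (deltaMass x)

/-- `φ_{α,C}(t) = t + ⌈C t^{(1+2α)/2} √(α log t)⌉`. -/
noncomputable def phiAC (α C t : ℝ) : ℝ :=
  t + ((⌈C * t ^ ((1 + 2 * α) / 2) * Real.sqrt (α * Real.log t)⌉ : ℤ) : ℝ)

/-- `ψ_{α,C}(x) = min (1, x + C |log(2x)|^{-α})`. -/
noncomputable def psiAC (α C x : ℝ) : ℝ :=
  min 1 (x + C * |Real.log (2 * x)| ^ (-α))

/-- `t_c(ε)`, the `ε`-mixing time of the continuous-time chain. -/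
noncomputable def contMix {Ω : Type*} [Fintype Ω] [DecidableEq Ω] (P : Matrix Ω Ω ℝ)
    (pi : Ω → ℝ) (ε : ℝ) : ℝ :=
  sInf {t : ℝ | 0 ≤ t ∧ contDistMax P pi t ≤ ε}

/-- `t_L(ε)`, the `ε`-mixing time of the lazy chain. -/
noncomputable def lazyMix {Ω : Type*} [Fintype Ω] [DecidableEq Ω] (P : Matrix Ω Ω ℝ)
    (pi : Ω → ℝ) (ε : ℝ) : ℕ :=
  sInf {t : ℕ | lazyDistMax P pi t ≤ ε}

/-- `t_ave(ε)`, the `ε`-mixing time of the averaged chain. -/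
noncomputable def aveMix {Ω : Type*} [Fintype Ω] [DecidableEq Ω] (P : Matrix Ω Ω ℝ)
    (pi : Ω → ℝ) (ε : ℝ) : ℕ :=
  sInf {t : ℕ | aveDistMax P pi t ≤ ε}

/-!
Let `Q` be the lazy chain. Poissonizing its time at rate `t` gives the law of the continuous-time
chain at time `t / 2`, so the two chains differ only by the Poisson fluctuation of the time, which
stays below `K = 2 √(t α log t)` outside an event of probability `2 t ^ (-α)`. To compare a
fluctuating time with a fixed one, run the lazy chain for `s` further steps: as a self-adjoint
operator with spectrum in `[0, 1]`, `Q` satisfies `‖Q ^ j (1 - Q)‖ ≤ 1 / (j + 1)`, so for a test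
function `f` with values in `[0, 1]` the functions `Q ^ (s + i) f`, `i ≤ N`, all dominate their
minimum, whose `π`-mean is only `N / (s + 1)` below that of `f`. With `N ≈ 2 K` and `s ≈ K t ^ α`
this loss is of order `t ^ (-α)` too.
-/

section SelfAdjointPowers

theorem succ_mul_mul_second_difference_le {a : ℕ → ℝ} (h₀ : ∀ n, 0 ≤ a n) (h₁ : Antitone a)
    (h₂ : Antitone fun n => a n - 2 * a (n + 1) + a (n + 2)) (n : ℕ) :
    (n + 1) * (n + 2) / 2 * (a n - 2 * a (n + 1) + a (n + 2)) ≤ a 0 := by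
  have taylor : a n + n * (a n - a (n + 1))
      + n * (n + 1) / 2 * (a n - 2 * a (n + 1) + a (n + 2)) ≤ a 0 := by
    induction n with
    | zero => simp
    | succ n ih =>
      have hstep := mul_le_mul_of_nonneg_left (h₂ n.le_succ)
        (by positivity : (0 : ℝ) ≤ (n + 1) * (n + 2) / 2)
      simp only [Nat.succ_eq_add_one, add_assoc, Nat.reduceAdd] at hstep ⊢
      push_cast
      linarith
  have hconv := mul_nonneg (n.cast_add_one_pos (α := ℝ)).le (sub_nonneg.2 (h₁ (n + 1).le_succ))
  have hpos := h₀ (n + 1)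
  simp only [Nat.succ_eq_add_one, add_assoc, Nat.reduceAdd] at hconv
  linarith

variable {V : Type*} [AddCommGroup V] [Module ℝ V] {B : LinearMap.BilinForm ℝ V}
  {Q A : Module.End ℝ V}

theorem bilin_self_nonneg (h₀ : ∀ x, 0 ≤ B (Q x) x) (h₁ : ∀ x, 0 ≤ B ((1 - Q) x) x) (x : V) :
    0 ≤ B x x := by
  simpa using add_nonneg (h₀ x) (h₁ x)

theorem bilin_sq_mul_nonneg (hQ : B.IsSelfAdjoint Q) (hQA : Commute Q A)
    (hA : ∀ x, 0 ≤ B (A x) x) (x : V) : 0 ≤ B ((Q ^ 2 * A) x) x := by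
  have h : (Q ^ 2 * A) x = Q (A (Q x)) := by
    rw [pow_two, mul_assoc, hQA.eq]
    rfl
  rw [h, hQ]
  exact hA (Q x)

theorem bilin_pow_mul_nonneg (hQ : B.IsSelfAdjoint Q) (hQA : Commute Q A)
    (hA : ∀ x, 0 ≤ B (A x) x) (hQA_nonneg : ∀ x, 0 ≤ B ((Q * A) x) x) (k : ℕ) (x : V) :
    0 ≤ B ((Q ^ k * A) x) x := by
  induction k using Nat.twoStepInduction generalizing x with
  | zero => simpa using hA x
  | one => simpa using hQA_nonneg x
  | more k ih _ =>
    rw [add_comm k, pow_add, mul_assoc]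
    exact bilin_sq_mul_nonneg hQ (((Commute.refl Q).pow_right k).mul_right hQA) ih x

theorem bilin_pow_mul_one_sub_pow_nonneg (hQ : B.IsSelfAdjoint Q) (h₀ : ∀ x, 0 ≤ B (Q x) x)
    (h₁ : ∀ x, 0 ≤ B ((1 - Q) x) x) (k l : ℕ) (x : V) :
    0 ≤ B ((Q ^ k * (1 - Q) ^ l) x) x := by
  have hQ' : B.IsSelfAdjoint (1 - Q : Module.End ℝ V) := LinearMap.isAdjointPair_one.sub hQ
  have hcomm : Commute Q (1 - Q) := (Commute.one_right Q).sub_right (Commute.refl Q)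
  have h_mul : ∀ x, 0 ≤ B ((Q * (1 - Q)) x) x := fun x => by
    have hsplit : Q * (1 - Q) = Q ^ 2 * (1 - Q) + (1 - Q) ^ 2 * Q := by noncomm_ring
    rw [hsplit, LinearMap.add_apply, map_add, LinearMap.add_apply]
    exact add_nonneg (bilin_sq_mul_nonneg hQ hcomm h₁ x)
      (bilin_sq_mul_nonneg hQ' hcomm.symm h₀ x)
  rw [(hcomm.pow_pow k l).eq]
  refine bilin_pow_mul_nonneg hQ' (hcomm.symm.pow_right k) (fun y => ?_) (fun y => ?_) l x
  · simpa using bilin_pow_mul_nonneg hQ (Commute.one_right Q) (bilin_self_nonneg h₀ h₁)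
      (by simpa using h₀) k y
  · rw [(hcomm.symm.pow_right k).eq]
    exact bilin_pow_mul_nonneg hQ hcomm h₁ h_mul k y

theorem bilin_pow_pow (hQ : B.IsSelfAdjoint Q) (m n : ℕ) (x y : V) :
    B ((Q ^ m) x) ((Q ^ n) y) = B ((Q ^ (m + n)) x) y := by
  induction n generalizing m with
  | zero => simp
  | succ n ih =>
    rw [pow_succ', Module.End.mul_apply, ← hQ, ← Module.End.mul_apply, ← pow_succ', ih,
      add_right_comm, add_assoc]

theorem sq_mul_bilin_pow_sub_pow_le (hQ : B.IsSelfAdjoint Q) (h₀ : ∀ x, 0 ≤ B (Q x) x)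
    (h₁ : ∀ x, 0 ≤ B ((1 - Q) x) x) (j : ℕ) (x : V) :
    (j + 1) ^ 2 * B ((Q ^ j) x - (Q ^ (j + 1)) x) ((Q ^ j) x - (Q ^ (j + 1)) x) ≤ B x x := by
  set a : ℕ → ℝ := fun n => B ((Q ^ n) x) x with ha
  have hpos := fun k l => bilin_pow_mul_one_sub_pow_nonneg hQ h₀ h₁ k l x
  have ha₀ : ∀ n, 0 ≤ a n := fun n => by simpa using hpos n 0
  have ha₁ : Antitone a := antitone_nat_of_succ_le fun n => by
    have h := hpos n 1
    rw [show Q ^ n * (1 - Q) ^ 1 = Q ^ n - Q ^ (n + 1) by noncomm_ring] at h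
    simpa [ha] using h
  have ha₂ : Antitone fun n => a n - 2 * a (n + 1) + a (n + 2) :=
    antitone_nat_of_succ_le fun n => by
      have h := hpos n 3
      rw [show Q ^ n * (1 - Q) ^ 3
        = Q ^ n - 3 • Q ^ (n + 1) + 3 • Q ^ (n + 2) - Q ^ (n + 3) by noncomm_ring] at h
      simp only [LinearMap.sub_apply, LinearMap.add_apply, LinearMap.smul_apply, map_sub, map_add,
        map_nsmul] at h
      simp only [nsmul_eq_mul, Nat.cast_ofNat] at h
      simp only [ha, add_assoc, Nat.reduceAdd]
      linarith
  have hsq : B ((Q ^ j) x - (Q ^ (j + 1)) x) ((Q ^ j) x - (Q ^ (j + 1)) x)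
      = a (2 * j) - 2 * a (2 * j + 1) + a (2 * j + 2) := by
    simp only [map_sub, LinearMap.sub_apply, bilin_pow_pow hQ, ha]
    ring_nf
  have hmain := succ_mul_mul_second_difference_le ha₀ ha₁ ha₂ (2 * j)
  have hnonneg : 0 ≤ a (2 * j) - 2 * a (2 * j + 1) + a (2 * j + 2) := by
    rw [← hsq]
    exact bilin_self_nonneg h₀ h₁ _
  rw [hsq]
  calc (j + 1 : ℝ) ^ 2 * (a (2 * j) - 2 * a (2 * j + 1) + a (2 * j + 2))
      ≤ ((2 * j : ℕ) + 1) * ((2 * j : ℕ) + 2) / 2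
          * (a (2 * j) - 2 * a (2 * j + 1) + a (2 * j + 2)) := by
        gcongr
        push_cast
        nlinarith [j.cast_nonneg (α := ℝ)]
    _ ≤ a 0 := hmain
    _ = B x x := by simp [ha]

end SelfAdjointPowers

section Stochastic

variable {Ω : Type*} [Fintype Ω]

theorem isStochastic_iff_mem_rowStochastic [DecidableEq Ω] {P : Matrix Ω Ω ℝ} :
    IsStochastic P ↔ P ∈ rowStochastic ℝ Ω :=
  mem_rowStochastic_iff_sum.symm

protected theorem IsStochastic.pow [DecidableEq Ω] {P : Matrix Ω Ω ℝ} (hP : IsStochastic P)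
    (n : ℕ) : IsStochastic (P ^ n) :=
  isStochastic_iff_mem_rowStochastic.2 (pow_mem (isStochastic_iff_mem_rowStochastic.1 hP) n)

protected theorem IsStochastic.lazyM [DecidableEq Ω] {P : Matrix Ω Ω ℝ} (hP : IsStochastic P) :
    IsStochastic (lazyM P) := by
  rw [isStochastic_iff_mem_rowStochastic] at hP ⊢
  rw [lazyM, smul_add]
  exact convex_rowStochastic (one_mem _) hP (by norm_num) (by norm_num) (by norm_num)

theorem IsStochastic.mulVec_mem_Icc {P : Matrix Ω Ω ℝ} (hP : IsStochastic P) {f : Ω → ℝ}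
    (hf : f ∈ Set.Icc 0 1) : P *ᵥ f ∈ Set.Icc 0 1 := by
  refine ⟨fun x => dotProduct_nonneg_of_nonneg (hP.1 x) hf.1, fun x => ?_⟩
  calc P x ⬝ᵥ f ≤ P x ⬝ᵥ 1 := dotProduct_le_dotProduct_of_nonneg_left hf.2 (hP.1 x)
    _ = 1 := by rw [dotProduct_one, hP.2 x]

protected theorem IsProbVec.vecMul {P : Matrix Ω Ω ℝ} {μ : Ω → ℝ} (hμ : IsProbVec μ)
    (hP : IsStochastic P) : IsProbVec (μ ᵥ* P) := by
  refine ⟨fun y => dotProduct_nonneg_of_nonneg hμ.1 fun x => hP.1 x y, ?_⟩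
  have hP_one : P *ᵥ 1 = 1 := funext fun x => by rw [mulVec, dotProduct_one, hP.2 x, Pi.one_apply]
  rw [← dotProduct_one, ← dotProduct_mulVec, hP_one, dotProduct_one, hμ.2]

theorem IsProbVec.dotProduct_mem_Icc {μ f : Ω → ℝ} (hμ : IsProbVec μ) (hf : f ∈ Set.Icc 0 1) :
    μ ⬝ᵥ f ∈ Set.Icc (0 : ℝ) 1 := by
  refine ⟨dotProduct_nonneg_of_nonneg hμ.1 hf.1, ?_⟩
  calc μ ⬝ᵥ f ≤ μ ⬝ᵥ 1 := dotProduct_le_dotProduct_of_nonneg_left hf.2 hμ.1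
    _ = 1 := by rw [dotProduct_one, hμ.2]

theorem isProbVec_deltaMass [DecidableEq Ω] (x : Ω) : IsProbVec (deltaMass x) := by
  refine ⟨fun y => ?_, by simp [deltaMass]⟩
  unfold deltaMass
  split_ifs <;> norm_num

theorem IsReversible.vecMul_eq {P : Matrix Ω Ω ℝ} {π : Ω → ℝ} (hrev : IsReversible P π)
    (hP : IsStochastic P) : π ᵥ* P = π := by
  ext y
  calc ∑ x, π x * P x y = ∑ x, π y * P y x := Finset.sum_congr rfl fun x _ => hrev x y
    _ = π y := by rw [← Finset.mul_sum, hP.2 y, mul_one]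

protected theorem IsReversible.lazyM [DecidableEq Ω] {P : Matrix Ω Ω ℝ} {π : Ω → ℝ}
    (hrev : IsReversible P π) : IsReversible (lazyM P) π := by
  intro x y
  rcases eq_or_ne x y with rfl | hxy
  · rfl
  · have h := hrev x y
    simp only [lazyM, Matrix.smul_apply, Matrix.add_apply, one_apply_ne hxy, one_apply_ne hxy.symm,
      zero_add, smul_eq_mul]
    linarith

theorem vecMul_pow_eq_self [DecidableEq Ω] {P : Matrix Ω Ω ℝ} {π : Ω → ℝ} (h : π ᵥ* P = π)
    (n : ℕ) : π ᵥ* P ^ n = π := by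
  induction n with
  | zero => simp
  | succ n ih => rw [pow_succ, ← vecMul_vecMul, ih, h]

end Stochastic

section TotalVariation

variable {Ω : Type*} [Fintype Ω] {μ ν : Ω → ℝ}

theorem tvDist_nonneg (μ ν : Ω → ℝ) : 0 ≤ tvDist μ ν :=
  div_nonneg (Finset.sum_nonneg fun _ _ => abs_nonneg _) zero_le_two

theorem dotProduct_sub_dotProduct_le_tvDist (h : ∑ x, μ x = ∑ x, ν x) {w : Ω → ℝ}
    (hw : w ∈ Set.Icc 0 1) : ν ⬝ᵥ w - μ ⬝ᵥ w ≤ tvDist μ ν := by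
  have hpoint : ∀ x, ν x * w x - μ x * w x ≤ |μ x - ν x| / 2 + (ν x - μ x) / 2 := fun x => by
    have h₀ : 0 ≤ w x := hw.1 x
    have h₁ : w x ≤ 1 := hw.2 x
    rcases abs_cases (μ x - ν x) with ⟨habs, _⟩ | ⟨habs, _⟩ <;> rw [habs] <;> nlinarith
  calc ν ⬝ᵥ w - μ ⬝ᵥ w = ∑ x, (ν x * w x - μ x * w x) := by
        rw [Finset.sum_sub_distrib]; rfl
    _ ≤ ∑ x, (|μ x - ν x| / 2 + (ν x - μ x) / 2) := Finset.sum_le_sum fun x _ => hpoint x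
    _ = tvDist μ ν := by
        rw [Finset.sum_add_distrib, ← Finset.sum_div, ← Finset.sum_div, Finset.sum_sub_distrib, h,
          sub_self, zero_div, add_zero, tvDist]

theorem exists_tvDist_eq_dotProduct_sub (h : ∑ x, μ x = ∑ x, ν x) :
    ∃ f ∈ Set.Icc (0 : Ω → ℝ) 1, tvDist μ ν = ν ⬝ᵥ f - μ ⬝ᵥ f := by
  classical
  let f : Ω → ℝ := fun x => if μ x ≤ ν x then 1 else 0
  have hpoint : ∀ x, |μ x - ν x| = 2 * (ν x * f x - μ x * f x) - (ν x - μ x) := fun x => by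
    by_cases hx : μ x ≤ ν x
    · simp only [f, if_pos hx, abs_of_nonpos (sub_nonpos.2 hx)]
      ring
    · simp only [f, if_neg hx, abs_of_pos (sub_pos.2 (not_le.1 hx))]
      ring
  refine ⟨f, ⟨fun x => ?_, fun x => ?_⟩, ?_⟩
  · simp only [f]; split_ifs <;> simp
  · simp only [f]; split_ifs <;> simp
  · rw [tvDist, Finset.sum_congr rfl fun x _ => hpoint x, Finset.sum_sub_distrib,
      Finset.sum_sub_distrib, h, sub_self, sub_zero, ← Finset.mul_sum, Finset.sum_sub_distrib,
      mul_div_cancel_left₀ _ two_ne_zero]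
    rfl

theorem tvDist_le_one (hμ : IsProbVec μ) (hν : IsProbVec ν) : tvDist μ ν ≤ 1 := by
  obtain ⟨f, hf, h⟩ := exists_tvDist_eq_dotProduct_sub (hμ.2.trans hν.2.symm)
  linarith [(hν.dotProduct_mem_Icc hf).2, (hμ.dotProduct_mem_Icc hf).1]

end TotalVariation

section WeightedInner

variable {Ω : Type*} [Fintype Ω] [DecidableEq Ω] {P : Matrix Ω Ω ℝ} {π : Ω → ℝ}

/-- The `L²(π)` inner product of functions on `Ω`, for which reversible chains are self-adjoint.
It is only semidefinite, since `π` may vanish at some points. -/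
noncomputable def weightedInner (π : Ω → ℝ) : LinearMap.BilinForm ℝ (Ω → ℝ) :=
  Matrix.toBilin' (diagonal π)

theorem weightedInner_apply (π f g : Ω → ℝ) : weightedInner π f g = ∑ x, π x * (f x * g x) := by
  rw [weightedInner, Matrix.toBilin'_apply', dotProduct]
  exact Finset.sum_congr rfl fun x _ => by rw [mulVec_diagonal, mul_left_comm]

theorem weightedInner_toLin'_left (P : Matrix Ω Ω ℝ) (π f g : Ω → ℝ) :
    weightedInner π (toLin' P f) g = ∑ x, ∑ y, π x * P x y * (f y * g x) := by
  simp only [weightedInner_apply, toLin'_apply, mulVec, dotProduct, Finset.mul_sum, Finset.sum_mul]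
  exact Finset.sum_congr rfl fun x _ => Finset.sum_congr rfl fun y _ => by ring

theorem IsReversible.isSelfAdjoint_toLin' (hrev : IsReversible P π) :
    (weightedInner π).IsSelfAdjoint (toLin' P) := fun f g => by
  have hsymm : weightedInner π f (toLin' P g) = weightedInner π (toLin' P g) f := by
    simp only [weightedInner_apply, mul_comm]
  rw [hsymm, weightedInner_toLin'_left, weightedInner_toLin'_left, Finset.sum_comm]
  refine Finset.sum_congr rfl fun y _ => Finset.sum_congr rfl fun x _ => ?_
  rw [hrev x y, mul_comm (f y)]

theorem sum_mul_sq_add_eq (hP : IsStochastic P) (hπP : π ᵥ* P = π) (c : ℝ) (f : Ω → ℝ) :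
    ∑ x, ∑ y, π x * P x y * (f x + c * f y) ^ 2
      = (1 + c ^ 2) * weightedInner π f f + 2 * c * weightedInner π (toLin' P f) f := by
  have hrow : ∑ x, ∑ y, π x * P x y * f x ^ 2 = weightedInner π f f := by
    rw [weightedInner_apply]
    refine Finset.sum_congr rfl fun x _ => ?_
    rw [← Finset.sum_mul, ← Finset.mul_sum, hP.2 x, mul_one, sq]
  have hcol : ∑ x, ∑ y, π x * P x y * f y ^ 2 = weightedInner π f f := by
    rw [weightedInner_apply, Finset.sum_comm]
    refine Finset.sum_congr rfl fun y _ => ?_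
    rw [← Finset.sum_mul, ← sq]
    exact congrArg (· * f y ^ 2) (congrFun hπP y)
  calc ∑ x, ∑ y, π x * P x y * (f x + c * f y) ^ 2
      = ∑ x, ∑ y, (π x * P x y * f x ^ 2 + c ^ 2 * (π x * P x y * f y ^ 2)
          + 2 * c * (π x * P x y * (f y * f x))) :=
        Finset.sum_congr rfl fun x _ => Finset.sum_congr rfl fun y _ => by ring
    _ = (1 + c ^ 2) * weightedInner π f f + 2 * c * weightedInner π (toLin' P f) f := by
        simp only [Finset.sum_add_distrib, ← Finset.mul_sum, hrow, hcol, weightedInner_toLin'_left]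
        ring

theorem weightedInner_add_toLin'_nonneg (hP : IsStochastic P) (hπ : 0 ≤ π) (hπP : π ᵥ* P = π)
    {c : ℝ} (hc : c ^ 2 = 1) (f : Ω → ℝ) :
    0 ≤ weightedInner π f f + c * weightedInner π (toLin' P f) f := by
  have hpos : 0 ≤ ∑ x, ∑ y, π x * P x y * (f x + c * f y) ^ 2 :=
    Finset.sum_nonneg fun x _ => Finset.sum_nonneg fun y _ =>
      mul_nonneg (mul_nonneg (hπ x) (hP.1 x y)) (sq_nonneg _)
  rw [sum_mul_sq_add_eq hP hπP, hc] at hpos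
  linarith

theorem toLin'_lazyM_apply (P : Matrix Ω Ω ℝ) (f : Ω → ℝ) :
    toLin' (lazyM P) f = (2 : ℝ)⁻¹ • (f + toLin' P f) := by
  simp [lazyM]

theorem weightedInner_lazyM_nonneg (hP : IsStochastic P) (hπ : 0 ≤ π) (hπP : π ᵥ* P = π)
    (f : Ω → ℝ) : 0 ≤ weightedInner π (toLin' (lazyM P) f) f := by
  have h := weightedInner_add_toLin'_nonneg hP hπ hπP (one_pow 2) f
  simp only [toLin'_lazyM_apply, map_smul, map_add, LinearMap.smul_apply, LinearMap.add_apply,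
    smul_eq_mul]
  linarith

theorem weightedInner_one_sub_lazyM_nonneg (hP : IsStochastic P) (hπ : 0 ≤ π)
    (hπP : π ᵥ* P = π) (f : Ω → ℝ) :
    0 ≤ weightedInner π ((1 - toLin' (lazyM P)) f) f := by
  have h := weightedInner_add_toLin'_nonneg hP hπ hπP (neg_one_sq (R := ℝ)) f
  simp only [LinearMap.sub_apply, Module.End.one_apply, toLin'_lazyM_apply, map_smul, map_add,
    map_sub, LinearMap.smul_apply, LinearMap.add_apply, smul_eq_mul]
  linarith

theorem sum_mul_abs_lazyM_pow_sub_le (hP : IsStochastic P) (hπ : IsProbVec π)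
    (hrev : IsReversible P π) {f : Ω → ℝ} (hf : f ∈ Set.Icc 0 1) (j : ℕ) :
    ∑ x, π x * |(lazyM P ^ j *ᵥ f - lazyM P ^ (j + 1) *ᵥ f) x| ≤ 1 / (j + 1) := by
  set g : Ω → ℝ := lazyM P ^ j *ᵥ f - lazyM P ^ (j + 1) *ᵥ f
  have hπP := hrev.vecMul_eq hP
  have hff : weightedInner π f f ≤ 1 := by
    have hfsq : f * f ∈ Set.Icc 0 1 :=
      ⟨mul_nonneg hf.1 hf.1, fun x => mul_le_one₀ (hf.2 x) (hf.1 x) (hf.2 x)⟩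
    rw [weightedInner_apply]
    exact (hπ.dotProduct_mem_Icc hfsq).2
  have hdecay : (j + 1) ^ 2 * weightedInner π g g ≤ 1 := by
    have h := sq_mul_bilin_pow_sub_pow_le hrev.lazyM.isSelfAdjoint_toLin'
      (weightedInner_lazyM_nonneg hP hπ.1 hπP) (weightedInner_one_sub_lazyM_nonneg hP hπ.1 hπP) j f
    simp only [← toLin'_pow, toLin'_apply] at h
    exact h.trans hff
  have hjensen : (∑ x, π x * |g x|) ^ 2 ≤ weightedInner π g g := by
    have h := Real.pow_arith_mean_le_arith_mean_pow Finset.univ π (fun x => |g x|)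
      (fun x _ => hπ.1 x) hπ.2 (fun x _ => abs_nonneg _) 2
    simpa only [weightedInner_apply, sq_abs, ← sq] using h
  rw [le_div_iff₀ (by positivity), mul_comm]
  refine (le_abs_self _).trans ((sq_le_one_iff_abs_le_one _).1 ?_)
  calc ((j + 1) * ∑ x, π x * |g x|) ^ 2
      = (j + 1) ^ 2 * (∑ x, π x * |g x|) ^ 2 := mul_pow _ _ _
    _ ≤ (j + 1) ^ 2 * weightedInner π g g := by gcongr
    _ ≤ 1 := hdecay

theorem dotProduct_sum_abs_lazyM_pow_sub_le (hP : IsStochastic P) (hπ : IsProbVec π)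
    (hrev : IsReversible P π) {f : Ω → ℝ} (hf : f ∈ Set.Icc 0 1) (s N : ℕ) :
    π ⬝ᵥ ∑ i ∈ Finset.range N, |lazyM P ^ (s + i) *ᵥ f - lazyM P ^ (s + (i + 1)) *ᵥ f|
      ≤ N / (s + 1) := by
  rw [dotProduct_sum]
  calc ∑ i ∈ Finset.range N, π ⬝ᵥ |lazyM P ^ (s + i) *ᵥ f - lazyM P ^ (s + (i + 1)) *ᵥ f|
      ≤ ∑ i ∈ Finset.range N, 1 / ((s + i : ℕ) + 1 : ℝ) :=
        Finset.sum_le_sum fun i _ => sum_mul_abs_lazyM_pow_sub_le hP hπ hrev hf (s + i)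
    _ ≤ ∑ _i ∈ Finset.range N, 1 / (s + 1 : ℝ) := by
        gcongr
        exact s.le_add_right _
    _ = N / (s + 1) := by
        rw [Finset.sum_const, Finset.card_range, nsmul_eq_mul, mul_one_div]

theorem exists_le_lazyM_pow_mulVec (hP : IsStochastic P) (hπ : IsProbVec π)
    (hrev : IsReversible P π) {f : Ω → ℝ} (hf : f ∈ Set.Icc 0 1) (s N : ℕ) :
    ∃ w ∈ Set.Icc (0 : Ω → ℝ) 1, (∀ i ≤ N, w ≤ lazyM P ^ (s + i) *ᵥ f) ∧
      π ⬝ᵥ f ≤ π ⬝ᵥ w + N / (s + 1) := by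
  set g : ℕ → Ω → ℝ := fun i => lazyM P ^ (s + i) *ᵥ f
  have hg_mem : ∀ i, g i ∈ Set.Icc 0 1 := fun i => (hP.lazyM.pow _).mulVec_mem_Icc hf
  set w : Ω → ℝ := (Finset.range (N + 1)).inf' Finset.nonempty_range_add_one g
  have hw_le : ∀ i ≤ N, w ≤ g i := fun i hi =>
    Finset.inf'_le g (Finset.mem_range_succ_iff.2 hi)
  have hw_nonneg : 0 ≤ w := Finset.le_inf' _ _ fun i _ => (hg_mem i).1
  refine ⟨w, ⟨hw_nonneg, (hw_le 0 N.zero_le).trans (hg_mem 0).2⟩, hw_le, ?_⟩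
  set D : Ω → ℝ := ∑ i ∈ Finset.range N, |g i - g (i + 1)|
  have hg_sub_le : g 0 - D ≤ w := Finset.le_inf' _ _ fun i hi => by
    rw [sub_le_comm, ← Finset.sum_range_sub' g i]
    exact (Finset.sum_le_sum fun j _ => le_abs_self _).trans
      (Finset.sum_le_sum_of_subset_of_nonneg
        (Finset.range_mono (Finset.mem_range_succ_iff.1 hi)) fun j _ _ => abs_nonneg _)
  have hD_le : π ⬝ᵥ D ≤ N / (s + 1) := dotProduct_sum_abs_lazyM_pow_sub_le hP hπ hrev hf s N
  have hstat : π ⬝ᵥ g 0 = π ⬝ᵥ f := by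
    rw [dotProduct_mulVec, vecMul_pow_eq_self (hrev.lazyM.vecMul_eq hP.lazyM)]
  have hmono := dotProduct_le_dotProduct_of_nonneg_left hg_sub_le hπ.1
  rw [dotProduct_sub, hstat] at hmono
  linarith

end WeightedInner

section RandomTime

open MeasureTheory

variable {Ω : Type*} [Fintype Ω] [DecidableEq Ω] {P Q : Matrix Ω Ω ℝ} {π μ : Ω → ℝ}

/-- The law of the chain `Q` started from `μ` and stopped at an independent random time with
law `ρ`. -/
noncomputable def randomTimeLaw (ρ : Measure ℕ) (Q : Matrix Ω Ω ℝ) (μ : Ω → ℝ) : Ω → ℝ :=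
  fun y => ∫ k, (μ ᵥ* Q ^ k) y ∂ρ

variable {ρ : Measure ℕ} [IsProbabilityMeasure ρ]

theorem integrable_vecMul_pow_apply (hQ : IsStochastic Q) (hμ : IsProbVec μ) (y : Ω) :
    Integrable (fun k => (μ ᵥ* Q ^ k) y) ρ := by
  refine .of_bound Measurable.of_discrete.aestronglyMeasurable 1 (.of_forall fun k => ?_)
  have hk := hμ.vecMul (hQ.pow k)
  rw [Real.norm_of_nonneg (hk.1 y), ← hk.2]
  exact Finset.single_le_sum (fun z _ => hk.1 z) (Finset.mem_univ y)

theorem integrable_vecMul_pow_dotProduct (hQ : IsStochastic Q) (hμ : IsProbVec μ) (w : Ω → ℝ) :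
    Integrable (fun k => μ ᵥ* Q ^ k ⬝ᵥ w) ρ :=
  integrable_finsetSum _ fun y _ => (integrable_vecMul_pow_apply hQ hμ y).mul_const (w y)

theorem randomTimeLaw_dotProduct (hQ : IsStochastic Q) (hμ : IsProbVec μ) (w : Ω → ℝ) :
    randomTimeLaw ρ Q μ ⬝ᵥ w = ∫ k, μ ᵥ* Q ^ k ⬝ᵥ w ∂ρ := by
  simp only [dotProduct, randomTimeLaw, ← integral_mul_const]
  exact (integral_finsetSum _ fun y _ =>
    (integrable_vecMul_pow_apply hQ hμ y).mul_const (w y)).symm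

theorem sum_randomTimeLaw (hQ : IsStochastic Q) (hμ : IsProbVec μ) :
    ∑ y, randomTimeLaw ρ Q μ y = 1 := by
  simp_rw [← dotProduct_one, randomTimeLaw_dotProduct hQ hμ, dotProduct_one,
    (hμ.vecMul (hQ.pow _)).2, integral_const, probReal_univ, one_smul]

theorem tvDist_lazyM_pow_le_randomTimeLaw (hP : IsStochastic P) (hπ : IsProbVec π)
    (hrev : IsReversible P π) (hμ : IsProbVec μ) (s a b : ℕ) :
    tvDist (μ ᵥ* lazyM P ^ (s + b)) π ≤ tvDist (randomTimeLaw ρ (lazyM P) μ) π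
      + ρ.real (Set.Icc a b)ᶜ + ((b - a : ℕ) : ℝ) / (s + 1) := by
  have hprob : ∀ k, IsProbVec (μ ᵥ* lazyM P ^ k) := fun k => hμ.vecMul (hP.lazyM.pow k)
  obtain ⟨f, hf, htv⟩ := exists_tvDist_eq_dotProduct_sub ((hprob (s + b)).2.trans hπ.2.symm)
  obtain ⟨w, hw, hw_le, hπw⟩ := exists_le_lazyM_pow_mulVec hP hπ hrev hf s (b - a)
  have hpoint : ∀ k, μ ᵥ* lazyM P ^ k ⬝ᵥ w
      ≤ μ ᵥ* lazyM P ^ (s + b) ⬝ᵥ f + (Set.Icc a b)ᶜ.indicator 1 k := fun k => by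
    by_cases hk : k ∈ Set.Icc a b
    · rw [Set.indicator_of_notMem (Set.notMem_compl_iff.2 hk), add_zero,
        show s + b = k + (s + (b - k)) by have := hk.2; lia, pow_add, ← vecMul_vecMul,
        ← dotProduct_mulVec (μ ᵥ* lazyM P ^ k)]
      exact dotProduct_le_dotProduct_of_nonneg_left (hw_le _ (Nat.sub_le_sub_left hk.1 b))
        (hprob k).1
    · rw [Set.indicator_of_mem (Set.mem_compl hk), Pi.one_apply]
      linarith [((hprob k).dotProduct_mem_Icc hw).2, ((hprob (s + b)).dotProduct_mem_Icc hf).1]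
  have hint : randomTimeLaw ρ (lazyM P) μ ⬝ᵥ w
      ≤ μ ᵥ* lazyM P ^ (s + b) ⬝ᵥ f + ρ.real (Set.Icc a b)ᶜ := by
    have hind : Integrable ((Set.Icc a b)ᶜ.indicator (1 : ℕ → ℝ)) ρ :=
      (integrable_const 1).indicator .of_discrete
    calc randomTimeLaw ρ (lazyM P) μ ⬝ᵥ w = ∫ k, μ ᵥ* lazyM P ^ k ⬝ᵥ w ∂ρ :=
          randomTimeLaw_dotProduct hP.lazyM hμ w
      _ ≤ ∫ k, (μ ᵥ* lazyM P ^ (s + b) ⬝ᵥ f + (Set.Icc a b)ᶜ.indicator 1 k) ∂ρ :=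
          integral_mono (integrable_vecMul_pow_dotProduct hP.lazyM hμ w)
            ((integrable_const _).add hind) hpoint
      _ = μ ᵥ* lazyM P ^ (s + b) ⬝ᵥ f + ρ.real (Set.Icc a b)ᶜ := by
          rw [integral_add (integrable_const _) hind, integral_indicator_one .of_discrete,
            integral_const, probReal_univ, one_smul]
  have htest := dotProduct_sub_dotProduct_le_tvDist
    ((sum_randomTimeLaw hP.lazyM hμ (ρ := ρ)).trans hπ.2.symm) hw
  linarith

end RandomTime

section Poissonization

open MeasureTheory ProbabilityTheory
open scoped Matrix.Norms.Operator NNReal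

variable {Ω : Type*} [Fintype Ω] [DecidableEq Ω]

theorem exp_smul_sub_one (A : Matrix Ω Ω ℝ) (t : ℝ) :
    NormedSpace.exp (t • (A - 1)) = Real.exp (-t) • NormedSpace.exp (t • A) := by
  have hsplit : t • (A - 1) = algebraMap ℝ (Matrix Ω Ω ℝ) (-t) + t • A := by
    rw [Algebra.algebraMap_eq_smul_one, smul_sub, neg_smul, neg_add_eq_sub]
  have hscalar : NormedSpace.exp (algebraMap ℝ (Matrix Ω Ω ℝ) (-t))
      = algebraMap ℝ (Matrix Ω Ω ℝ) (Real.exp (-t)) := by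
    rw [Real.exp_eq_exp_ℝ]
    exact (NormedSpace.algebraMap_exp_comm (-t)).symm
  rw [hsplit, Matrix.exp_add_of_commute _ _ (Algebra.commute_algebraMap_left _ _), hscalar,
    ← Algebra.smul_def]

theorem tsum_exp_mul_pow_div_factorial_mul_vecMul_pow (μ : Ω → ℝ) (A : Matrix Ω Ω ℝ) (t : ℝ)
    (y : Ω) :
    ∑' k : ℕ, Real.exp (-t) * t ^ k / k.factorial * (μ ᵥ* A ^ k) y
      = (μ ᵥ* NormedSpace.exp (t • (A - 1))) y := by
  have hexp := NormedSpace.exp_series_hasSum_exp' (𝕂 := ℝ) (t • A)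
  have hterm := ((hasSum_sum fun x (_ : x ∈ Finset.univ) =>
    (Pi.hasSum.1 (Pi.hasSum.1 hexp x) y).mul_left (μ x)).mul_left (Real.exp (-t))).tsum_eq
  rw [exp_smul_sub_one, vecMul_smul]
  refine Eq.trans (tsum_congr fun k => ?_) hterm
  simp only [vecMul, dotProduct, smul_pow, Matrix.smul_apply, smul_eq_mul, Finset.mul_sum]
  exact Finset.sum_congr rfl fun x _ => by ring

theorem contDist_half_eq (P : Matrix Ω Ω ℝ) (π μ : Ω → ℝ) (r : ℝ≥0) :
    contDist P π (r / 2) μ = tvDist (randomTimeLaw (poissonMeasure r) (lazyM P) μ) π := by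
  have hgen : (r : ℝ) • (lazyM P - 1) = ((r : ℝ) / 2) • (P - 1) := by
    rw [lazyM]
    module
  have hlaw : randomTimeLaw (poissonMeasure r) (lazyM P) μ
      = μ ᵥ* NormedSpace.exp (((r : ℝ) / 2) • (P - 1)) := funext fun y => by
    rw [← hgen, ← tsum_exp_mul_pow_div_factorial_mul_vecMul_pow, randomTimeLaw,
      integral_poissonMeasure]
    simp only [smul_eq_mul]
  rw [hlaw, contDist]
  simp only [tsum_exp_mul_pow_div_factorial_mul_vecMul_pow]

end Poissonization

section PoissonTail

open MeasureTheory ProbabilityTheory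
open scoped NNReal

variable {r : ℝ≥0}

theorem hasSum_poissonWeight_mul_exp (r : ℝ≥0) (θ : ℝ) :
    HasSum (fun k : ℕ => Real.exp (-r) * r ^ k / k.factorial * Real.exp (θ * k))
      (Real.exp (r * (Real.exp θ - 1))) := by
  have h := (NormedSpace.expSeries_div_hasSum_exp (r * Real.exp θ)).mul_left (Real.exp (-r))
  rw [← Real.exp_eq_exp_ℝ, ← Real.exp_add, neg_add_eq_sub, ← mul_sub_one] at h
  refine h.congr_fun fun k => ?_
  rw [mul_pow, ← Real.exp_nat_mul, mul_comm θ]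
  ring

theorem integrable_exp_mul_poissonMeasure (r : ℝ≥0) (θ : ℝ) :
    Integrable (fun k : ℕ => Real.exp (θ * k)) (poissonMeasure r) := by
  simpa only [integrable_poissonMeasure_iff, Real.norm_of_nonneg (Real.exp_nonneg _)]
    using (hasSum_poissonWeight_mul_exp r θ).summable

theorem mgf_natCast_poissonMeasure (r : ℝ≥0) (θ : ℝ) :
    mgf (Nat.cast : ℕ → ℝ) (poissonMeasure r) θ = Real.exp (r * (Real.exp θ - 1)) := by
  rw [mgf, integral_poissonMeasure]
  exact (hasSum_poissonWeight_mul_exp r θ).tsum_eq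

theorem exp_mul_mgf_poissonMeasure_le {c : ℝ} (hc : |c| ≤ 2 * r) :
    Real.exp (-(c / (2 * r)) * (r + c)) * mgf (Nat.cast : ℕ → ℝ) (poissonMeasure r) (c / (2 * r))
      ≤ Real.exp (-(c ^ 2 / (4 * r))) := by
  rcases eq_or_ne r 0 with rfl | hr
  · simp
  have hr_pos : (0 : ℝ) < r := NNReal.coe_pos.2 (pos_iff_ne_zero.2 hr)
  set θ := c / (2 * r) with hθ
  have hc_eq : c = 2 * r * θ := by rw [hθ]; field_simp
  have hθ_le : |θ| ≤ 1 := by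
    rw [hθ, abs_div, abs_of_pos (by positivity : (0 : ℝ) < 2 * r)]
    exact div_le_one_of_le₀ hc (by positivity)
  have hexp := (abs_le.1 (Real.abs_exp_sub_one_sub_id_le hθ_le)).2
  rw [mgf_natCast_poissonMeasure, ← Real.exp_add, Real.exp_le_exp]
  calc -θ * (r + c) + r * (Real.exp θ - 1)
      = r * (Real.exp θ - 1 - θ) - θ * c := by ring
    _ ≤ r * θ ^ 2 - θ * c := by gcongr
    _ = -(c ^ 2 / (4 * r)) := by rw [hc_eq]; field_simp; ring

theorem poissonMeasure_real_compl_Icc_le {K : ℝ} (hK : 0 ≤ K) (hKr : K ≤ 2 * r) :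
    (poissonMeasure r).real (Set.Icc ⌈r - K⌉₊ ⌊r + K⌋₊)ᶜ ≤ 2 * Real.exp (-(K ^ 2 / (4 * r))) := by
  have hK_abs : |K| ≤ 2 * r := by rwa [abs_of_nonneg hK]
  have hupper : (poissonMeasure r).real {k : ℕ | r + K ≤ k} ≤ Real.exp (-(K ^ 2 / (4 * r))) :=
    (measure_ge_le_exp_mul_mgf _ (by positivity) (integrable_exp_mul_poissonMeasure r _)).trans
      (exp_mul_mgf_poissonMeasure_le hK_abs)
  have hlower : (poissonMeasure r).real {k : ℕ | (k : ℝ) ≤ r + -K}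
      ≤ Real.exp (-(K ^ 2 / (4 * r))) := by
    rw [← neg_sq K]
    exact (measure_le_le_exp_mul_mgf _
      (div_nonpos_of_nonpos_of_nonneg (neg_nonpos.2 hK) (by positivity))
      (integrable_exp_mul_poissonMeasure r _)).trans
        (exp_mul_mgf_poissonMeasure_le (by rwa [abs_neg]))
  have hsub : (Set.Icc ⌈r - K⌉₊ ⌊r + K⌋₊)ᶜ
      ⊆ {k : ℕ | (k : ℝ) ≤ r + -K} ∪ {k : ℕ | r + K ≤ k} := fun k hk => by
    rw [Set.mem_compl_iff, Set.mem_Icc, Nat.ceil_le, Nat.le_floor_iff (by positivity),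
      not_and_or, not_le, not_le] at hk
    exact hk.imp (fun h => h.le) fun h => h.le
  calc (poissonMeasure r).real (Set.Icc ⌈r - K⌉₊ ⌊r + K⌋₊)ᶜ
      ≤ (poissonMeasure r).real ({k : ℕ | (k : ℝ) ≤ r + -K} ∪ {k : ℕ | r + K ≤ k}) :=
        measureReal_mono hsub
    _ ≤ (poissonMeasure r).real {k : ℕ | (k : ℝ) ≤ r + -K}
          + (poissonMeasure r).real {k : ℕ | r + K ≤ k} := measureReal_union_le _ _
    _ ≤ 2 * Real.exp (-(K ^ 2 / (4 * r))) := by linarith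

end PoissonTail

section LazyVersusContinuous

variable {Ω : Type*} [Fintype Ω] [DecidableEq Ω] {P : Matrix Ω Ω ℝ} {π μ : Ω → ℝ} {α t : ℝ}

theorem tvDist_lazyM_pow_le_contDist (hP : IsStochastic P) (hπ : IsProbVec π)
    (hrev : IsReversible P π) (hμ : IsProbVec μ) (ht : 0 ≤ t) {K : ℝ} (hK : 0 ≤ K)
    (hKt : K ≤ 2 * t) {m : ℕ} (hm : t + K < m + 1) :
    tvDist (μ ᵥ* lazyM P ^ m) π ≤ contDist P π (t / 2) μ + 2 * Real.exp (-(K ^ 2 / (4 * t)))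
      + 2 * K / (m + 1 - (t + K)) := by
  lift t to NNReal using ht
  set a := ⌈t - K⌉₊
  set b := ⌊t + K⌋₊
  have hb_le : (b : ℝ) ≤ t + K := Nat.floor_le (by positivity)
  have hbm : b ≤ m := Nat.lt_succ_iff.1 ((Nat.floor_lt (by positivity)).2 (mod_cast hm))
  have hwidth : ((b - a : ℕ) : ℝ) ≤ 2 * K := by
    rcases le_total a b with hab | hba
    · rw [Nat.cast_sub hab]
      linarith [Nat.le_ceil (t - K)]
    · rw [Nat.sub_eq_zero_of_le hba, Nat.cast_zero]
      positivity
  have hgap : m + 1 - (t + K) ≤ ((m - b : ℕ) : ℝ) + 1 := by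
    rw [Nat.cast_sub hbm]
    linarith
  have hloss : ((b - a : ℕ) : ℝ) / ((m - b : ℕ) + 1) ≤ 2 * K / (m + 1 - (t + K)) :=
    div_le_div₀ (by positivity) hwidth (sub_pos.2 hm) hgap
  have hcompare := tvDist_lazyM_pow_le_randomTimeLaw hP hπ hrev hμ (m - b) a b
    (ρ := ProbabilityTheory.poissonMeasure t)
  rw [Nat.sub_add_cancel hbm, ← contDist_half_eq] at hcompare
  linarith [poissonMeasure_real_compl_Icc_le hK hKt]

theorem add_mul_sqrt_mul_rpow_le_phiAC (α C : ℝ) (ht : 0 < t) :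
    t + C * (√(t * (α * Real.log t)) * t ^ α) ≤ phiAC α C t := by
  have hpow : t ^ ((1 + 2 * α) / 2) = √t * t ^ α := by
    rw [Real.sqrt_eq_rpow, ← Real.rpow_add ht]
    ring_nf
  rw [phiAC, hpow, Real.sqrt_mul ht.le, mul_right_comm, ← mul_assoc]
  exact add_le_add_right (Int.le_ceil _) t

theorem lazyDist_phiAC_le_contDist_of_pos (hP : IsStochastic P) (hπ : IsProbVec π)
    (hrev : IsReversible P π) (hμ : IsProbVec μ) (ht : 0 < t) (hL : 0 < α * Real.log t)
    (hLt : α * Real.log t ≤ t) :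
    lazyDist P π (phiAC α 6 t) μ ≤ contDist P π (t / 2) μ + 3 * t ^ (-α) := by
  set R := √(t * (α * Real.log t)) with hR
  have hR_pos : 0 < R := Real.sqrt_pos.2 (mul_pos ht hL)
  have hRt : R ≤ t := Real.sqrt_le_iff.2 ⟨ht.le, by rw [sq]; gcongr⟩
  have hrpow : 1 ≤ t ^ α := by
    rw [Real.rpow_def_of_pos ht, mul_comm]
    exact Real.one_le_exp hL.le
  have hR_le : R ≤ R * t ^ α := le_mul_of_one_le_right hR_pos.le hrpow
  have hm : t + 6 * (R * t ^ α) < ⌊phiAC α 6 t⌋₊ + 1 :=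
    (add_mul_sqrt_mul_rpow_le_phiAC α 6 ht).trans_lt (Nat.lt_floor_add_one _)
  have htail : Real.exp (-((2 * R) ^ 2 / (4 * t))) = t ^ (-α) := by
    have hsq : (2 * R) ^ 2 / (4 * t) = α * Real.log t := by
      rw [mul_pow, hR, Real.sq_sqrt (mul_pos ht hL).le]
      field_simp
      ring
    rw [hsq, Real.rpow_def_of_pos ht, mul_neg, mul_comm]
  have hloss : 2 * (2 * R) / (⌊phiAC α 6 t⌋₊ + 1 - (t + 2 * R)) ≤ t ^ (-α) := by
    rw [Real.rpow_neg ht.le, div_le_iff₀ (by linarith), inv_mul_eq_div, le_div_iff₀ (by positivity)]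
    linarith
  have hmain := tvDist_lazyM_pow_le_contDist hP hπ hrev hμ ht.le (by positivity : 0 ≤ 2 * R)
    (by linarith) (by linarith : t + 2 * R < ⌊phiAC α 6 t⌋₊ + 1)
  rw [htail] at hmain
  rw [lazyDist]
  linarith

theorem lazyDist_phiAC_le_contDist (hP : IsStochastic P) (hπ : IsProbVec π)
    (hrev : IsReversible P π) (hμ : IsProbVec μ) (hα : 0 ≤ α) (ht : 1 ≤ t)
    (hαt : α * Real.log t ≤ t) :
    lazyDist P π (phiAC α 6 t) μ ≤ contDist P π (t / 2) μ + 3 * t ^ (-α) := by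
  have ht_pos : 0 < t := zero_lt_one.trans_le ht
  rcases (mul_nonneg hα (Real.log_nonneg ht)).eq_or_lt with hL | hL
  · have h_one : t ^ (-α) = 1 := by
      rw [Real.rpow_def_of_pos ht_pos, mul_neg, mul_comm, ← hL, neg_zero, Real.exp_zero]
    have hlazy : lazyDist P π (phiAC α 6 t) μ ≤ 1 :=
      tvDist_le_one (hμ.vecMul (hP.lazyM.pow _)) hπ
    have hcont : 0 ≤ contDist P π (t / 2) μ := tvDist_nonneg _ _
    linarith
  · exact lazyDist_phiAC_le_contDist_of_pos hP hπ hrev hμ ht_pos hL hαt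

theorem lazy_dist_le_cont_dist_general (hP : IsStochastic P) (hπ : IsProbVec π)
    (hrev : IsReversible P π) (hα : 0 ≤ α) (ht : 1 ≤ t) (hαt : α * Real.log t ≤ t) :
    (∀ μ : Ω → ℝ, IsProbVec μ →
      lazyDist P π (phiAC α 6 t) μ ≤ contDist P π (t / 2) μ + 3 * t ^ (-α)) ∧
    lazyDistMax P π (phiAC α 6 t) ≤ contDistMax P π (t / 2) + 3 * t ^ (-α) := by
  have hpoint := fun (μ : Ω → ℝ) (hμ : IsProbVec μ) =>
    lazyDist_phiAC_le_contDist hP hπ hrev hμ hα ht hαt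
  have hne : Nonempty Ω := Finset.univ_nonempty_iff.1 <|
    Finset.nonempty_of_sum_ne_zero (hπ.2.symm ▸ one_ne_zero)
  refine ⟨hpoint, ciSup_le fun x => (hpoint _ (isProbVec_deltaMass x)).trans ?_⟩
  gcongr
  exact le_ciSup (f := fun x => contDist P π (t / 2) (deltaMass x)) (Set.finite_range _).bddAbove x

end LazyVersusContinuous

/-- **Theorem 1 (eq. (1)) of Hermon–Peres.**
There are absolute constants `C₁, C₂ > 0` such that for every finite irreducible reversible
Markov chain, every initial distribution `μ`, every `0 < α ≤ 1/2` and every `t ≥ 1`,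
`d_L(φ_{α,C₁}(t), μ) ≤ d_c(t/2, μ) + C₂ t^{-α}`, and the same holds for the worst-case
distances. -/
theorem lazy_dist_le_cont_dist :
    ∃ C₁ C₂ : ℝ, 0 < C₁ ∧ 0 < C₂ ∧
      ∀ (Ω : Type) [Fintype Ω] [DecidableEq Ω] [Nonempty Ω]
        (P : Matrix Ω Ω ℝ) (pi : Ω → ℝ), IsRevMC P pi →
        ∀ α t : ℝ, 0 < α → α ≤ 1 / 2 → 1 ≤ t →
          (∀ μ : Ω → ℝ, IsProbVec μ →
            lazyDist P pi (phiAC α C₁ t) μ ≤ contDist P pi (t / 2) μ + C₂ * t ^ (-α)) ∧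
          lazyDistMax P pi (phiAC α C₁ t) ≤ contDistMax P pi (t / 2) + C₂ * t ^ (-α) := by
  refine ⟨6, 3, by norm_num, by norm_num, fun Ω _ _ _ P pi h α t hα hα_le ht => ?_⟩
  have hαt : α * Real.log t ≤ t :=
    (mul_le_of_le_one_left (Real.log_nonneg ht) (by linarith)).trans
      (Real.log_le_self (by linarith))
  exact lazy_dist_le_cont_dist_general h.1.1 h.1.2.2.1 h.2 hα.le ht hαt
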